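/- Let F be a real Hilbert space, U ⊆ F a nonempty convex set contained in an open convex set A on which Φ : F → ℝ is Fréchet differentiable. Let X be an F-valued Bochner-integrable random element on a probability space with X ∈ U almost surely, E‖X‖ < ∞ and E|Φ(X)| < ∞, and suppose the Bochner mean f̄ = E[X] belongs to U. Then for every g ∈ U for which E[d_Φ(X,g)] is finite, the bias–variance decomposition holds: E[d_Φ(X,g)] = E[d_Φ(X,f̄)] + d_Φ(f̄,g). -/

import Mathlib

/-!
For any `m`, the divergences satisfy the three-point identity
`d(f, g) = d(f, m) + d(m, g) + (DΦ(m) - DΦ(g))(f - m)`. At `f = X` and `m = E[X]` the last term is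
a fixed continuous linear functional of the centred variable `X - E[X]`, so its expectation is zero.
-/

open scoped RealInnerProductSpace
open MeasureTheory

/-- The functional Bregman divergence `d_Φ(f,g) = Φ(f) − Φ(g) − ⟪∇Φ(g), f − g⟫`. -/
noncomputable def bregmanDiv {F : Type*} [NormedAddCommGroup F] [InnerProductSpace ℝ F]
    (Φ : F → ℝ) (Φ' : F → F) (f g : F) : ℝ :=
  Φ f - Φ g - ⟪Φ' g, f - g⟫

section DualDerivative

variable {F : Type*} [NormedAddCommGroup F] [NormedSpace ℝ F]

/-- The Bregman divergence `d_Φ(f,g) = Φ(f) − Φ(g) − DΦ(g)(f − g)` on a normed space, where no Riesz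
representation is available: the derivative is a map `Φ'` into the dual, and, as in `bregmanDiv`, is
passed as separate data. -/
def bregmanDivDual (Φ : F → ℝ) (Φ' : F → StrongDual ℝ F) (f g : F) : ℝ :=
  Φ f - Φ g - Φ' g (f - g)

theorem bregmanDivDual_three_point (Φ : F → ℝ) (Φ' : F → StrongDual ℝ F) (f m g : F) :
    bregmanDivDual Φ Φ' f g
      = bregmanDivDual Φ Φ' f m + bregmanDivDual Φ Φ' m g + (Φ' m - Φ' g) (f - m) := by
  simp only [bregmanDivDual, sub_apply, map_sub]
  ring

variable {Ω : Type*} [MeasurableSpace Ω] {P : Measure Ω} {X : Ω → F}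

theorem integrable_bregmanDivDual [IsFiniteMeasure P] {Φ : F → ℝ} (Φ' : F → StrongDual ℝ F)
    (hX : Integrable X P) (hΦX : Integrable (fun ω => Φ (X ω)) P) (g : F) :
    Integrable (fun ω => bregmanDivDual Φ Φ' (X ω) g) P :=
  (hΦX.sub (integrable_const _)).sub ((Φ' g).integrable_comp (hX.sub (integrable_const g)))

theorem integral_clm_sub_integral_eq_zero [CompleteSpace F] [IsProbabilityMeasure P]
    {E : Type*} [NormedAddCommGroup E] [NormedSpace ℝ E] [CompleteSpace E] (hX : Integrable X P)
    (L : F →L[ℝ] E) :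
    ∫ ω, L (X ω - ∫ ω', X ω' ∂P) ∂P = 0 := by
  have hcentred : Integrable (fun ω => X ω - ∫ ω', X ω' ∂P) P := hX.sub (integrable_const _)
  rw [L.integral_comp_comm hcentred, ← average_eq_integral P X, integral_sub_average, map_zero]

theorem bregman_bias_variance_general [CompleteSpace F] [IsProbabilityMeasure P]
    {Φ : F → ℝ} {Φ' : F → StrongDual ℝ F} {g : F}
    (hX : Integrable X P) (hΦX : Integrable (fun ω => Φ (X ω)) P)
    (hmean : HasFDerivAt Φ (Φ' (∫ ω, X ω ∂P)) (∫ ω, X ω ∂P))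
    (hg : HasFDerivAt Φ (Φ' g) g) :
    ∫ ω, bregmanDivDual Φ Φ' (X ω) g ∂P
      = (∫ ω, bregmanDivDual Φ Φ' (X ω) (∫ ω', X ω' ∂P) ∂P)
        + bregmanDivDual Φ Φ' (∫ ω, X ω ∂P) g := by
  set m := ∫ ω, X ω ∂P
  have hdiv : Integrable (fun ω => bregmanDivDual Φ Φ' (X ω) m) P :=
    integrable_bregmanDivDual Φ' hX hΦX m
  have hcross : Integrable (fun ω => (Φ' m - Φ' g) (X ω - m)) P :=
    (Φ' m - Φ' g).integrable_comp (hX.sub (integrable_const m))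
  have hconst : Integrable (fun _ => bregmanDivDual Φ Φ' m g) P := integrable_const _
  have hsum : Integrable (fun ω => bregmanDivDual Φ Φ' (X ω) m + bregmanDivDual Φ Φ' m g) P :=
    hdiv.add hconst
  calc ∫ ω, bregmanDivDual Φ Φ' (X ω) g ∂P
      = ∫ ω, (bregmanDivDual Φ Φ' (X ω) m + bregmanDivDual Φ Φ' m g
          + (Φ' m - Φ' g) (X ω - m)) ∂P := by
        simp only [← bregmanDivDual_three_point]
    _ = (∫ ω, bregmanDivDual Φ Φ' (X ω) m ∂P) + bregmanDivDual Φ Φ' m g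
          + ∫ ω, (Φ' m - Φ' g) (X ω - m) ∂P := by
        rw [integral_add hsum hcross, integral_add hdiv hconst, integral_const,
          probReal_univ, one_smul]
    _ = (∫ ω, bregmanDivDual Φ Φ' (X ω) m ∂P) + bregmanDivDual Φ Φ' m g := by
        rw [integral_clm_sub_integral_eq_zero hX, add_zero]

end DualDerivative

theorem bregmanDiv_eq_bregmanDivDual {F : Type*} [NormedAddCommGroup F] [InnerProductSpace ℝ F]
    [CompleteSpace F] (Φ : F → ℝ) (Φ' : F → F) (f g : F) :
    bregmanDiv Φ Φ' f g
      = bregmanDivDual Φ (fun x => InnerProductSpace.toDual ℝ F (Φ' x)) f g :=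
  rfl

/-- Bias–variance decomposition for the functional Bregman divergence: if `X` is a
Bochner-integrable random element of a real Hilbert space taking values a.s. in a nonempty
convex set `U` contained in an open convex set `A` on which `Φ` is Fréchet differentiable
(with Riesz gradient `Φ'`), `Φ(X)` is integrable, and the Bochner mean `f̄ = E[X]` lies in
`U`, then for every `g ∈ U` with `E[d_Φ(X,g)]` finite,
`E[d_Φ(X,g)] = E[d_Φ(X,f̄)] + d_Φ(f̄,g)`. -/
theorem bregman_bias_variance
    {F : Type*} [NormedAddCommGroup F] [InnerProductSpace ℝ F] [CompleteSpace F]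
    {Ω : Type*} [MeasurableSpace Ω] (P : Measure Ω) [IsProbabilityMeasure P]
    (A U : Set F) (hA : IsOpen A) (hAconv : Convex ℝ A)
    (hUne : U.Nonempty) (hUconv : Convex ℝ U) (hUA : U ⊆ A)
    (Φ : F → ℝ) (Φ' : F → F)
    (hdiff : ∀ x ∈ A, HasGradientAt Φ (Φ' x) x)
    (X : Ω → F)
    (hXint : Integrable X P)
    (hXU : ∀ᵐ ω ∂P, X ω ∈ U)
    (hΦX : Integrable (fun ω => Φ (X ω)) P)
    (fbar : F) (hfbar : fbar = ∫ ω, X ω ∂P) (hfbarU : fbar ∈ U)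
    (g : F) (hg : g ∈ U)
    (hint : Integrable (fun ω => bregmanDiv Φ Φ' (X ω) g) P) :
    ∫ ω, bregmanDiv Φ Φ' (X ω) g ∂P
      = (∫ ω, bregmanDiv Φ Φ' (X ω) fbar ∂P) + bregmanDiv Φ Φ' fbar g := by
  subst hfbar
  simpa only [bregmanDiv_eq_bregmanDivDual] using bregman_bias_variance_general hXint hΦX
    (hdiff _ (hUA hfbarU)).hasFDerivAt (hdiff g (hUA hg)).hasFDerivAt
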